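/- arXiv:1103.4633 — 4 statements merged into one kernel-verified Lean document; each statement's English description precedes it below -/
import Mathlib

section
/- Let R and S be commutative local rings with maximal ideals m_R and m_S, and let f : R → S be a local ring homomorphism. Suppose there is an integer C ≥ 1 such that for every l ≥ 1: (a) m_S^{lC} ⊆ m_R^l·S, where m_R^l·S denotes the ideal of S generated by f(m_R^l), and (b) the contraction of m_R^l·S along f equals m_R^l, i.e. f^{-1}(m_R^l·S) = m_R^l. Then for every x ∈ m_R whose order t := ord_R(x) is finite, one has t ≤ ord_S(f(x)) ≤ 2C·t. -/
/-- The order of vanishing of an element `z` of a local ring: the supremum of the set of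
`s ∈ ℕ` such that `z` lies in the `s`-th power of the maximal ideal, as an element of
`ℕ∞` (so it is `⊤` when `z` lies in every power). -/
noncomputable def ringOrd (R : Type*) [CommRing R] [IsLocalRing R] (z : R) : ℕ∞ :=
  sSup ((fun n : ℕ => (n : ℕ∞)) '' {s : ℕ | z ∈ (IsLocalRing.maximalIdeal R) ^ s})

section

open IsLocalRing

variable {R S : Type*} [CommRing R] [IsLocalRing R] [CommRing S] [IsLocalRing S]

theorem natCast_le_ringOrd_iff {n : ℕ} {z : R} :
    (n : ℕ∞) ≤ ringOrd R z ↔ z ∈ maximalIdeal R ^ n := by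
  refine ⟨fun hn ↦ ?_, fun hz ↦ le_sSup ⟨n, hz, rfl⟩⟩
  cases n with
  | zero => simp
  | succ k =>
    have hk : (k : ℕ∞) < ringOrd R z := lt_of_lt_of_le (mod_cast k.lt_succ_self) hn
    obtain ⟨_, ⟨s, hs, rfl⟩, hks⟩ := lt_sSup_iff.mp hk
    exact Ideal.pow_le_pow_right (Nat.succ_le_of_lt (Nat.cast_lt.mp hks)) hs

theorem ringOrd_lt_natCast_iff {n : ℕ} {z : R} :
    ringOrd R z < n ↔ z ∉ maximalIdeal R ^ n := by
  rw [← not_le, natCast_le_ringOrd_iff]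

theorem ringOrd_le_ringOrd_map (f : R →+* S) [IsLocalHom f] (x : R) :
    ringOrd R x ≤ ringOrd S (f x) := by
  refine ENat.forall_natCast_le_iff_le.mp fun n hn ↦ ?_
  rw [natCast_le_ringOrd_iff] at hn ⊢
  have map_pow_le : (maximalIdeal R ^ n).map f ≤ maximalIdeal S ^ n := by
    rw [Ideal.map_pow]
    exact Ideal.pow_right_mono (((local_hom_TFAE f).out 0 2).mp ‹IsLocalHom f›) n
  exact map_pow_le (Ideal.mem_map_of_mem f hn)

theorem ringOrd_map_lt_of_ringOrd_lt (f : R →+* S) {l n : ℕ}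
    (pow_le_map : maximalIdeal S ^ n ≤ (maximalIdeal R ^ l).map f)
    (comap_map_le : ((maximalIdeal R ^ l).map f).comap f ≤ maximalIdeal R ^ l)
    {x : R} (hx : ringOrd R x < l) : ringOrd S (f x) < n := by
  rw [ringOrd_lt_natCast_iff] at hx ⊢
  exact fun hfx ↦ hx (comap_map_le (pow_le_map hfx))

end

/-- algebraic core of Lemma 3.3: let `f : R → S` be a local homomorphism
of commutative local rings, and `C ≥ 1` an integer such that for all `l ≥ 1`:
(a) `m_S^{lC} ⊆ m_R^l · S` and (b) `f⁻¹(m_R^l · S) = m_R^l`.  Then for every `x ∈ m_R`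
of finite order `t := ord_R(x)`, one has `t ≤ ord_S(f x) ≤ 2·C·t`. -/
theorem ringOrd_le_ringOrd_map_le
    {R S : Type*} [CommRing R] [IsLocalRing R] [CommRing S] [IsLocalRing S]
    (f : R →+* S) (hf : IsLocalHom f) (C : ℕ) (hC : 1 ≤ C)
    (ha : ∀ l : ℕ, 1 ≤ l →
      (IsLocalRing.maximalIdeal S) ^ (l * C) ≤
        Ideal.map f ((IsLocalRing.maximalIdeal R) ^ l))
    (hb : ∀ l : ℕ, 1 ≤ l →
      Ideal.comap f (Ideal.map f ((IsLocalRing.maximalIdeal R) ^ l)) =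
        (IsLocalRing.maximalIdeal R) ^ l)
    (x : R) (hx : x ∈ IsLocalRing.maximalIdeal R)
    (ht : ringOrd R x ≠ ⊤) :
    ringOrd R x ≤ ringOrd S (f x) ∧ ringOrd S (f x) ≤ 2 * (C : ℕ∞) * ringOrd R x := by
  refine ⟨ringOrd_le_ringOrd_map f x, ?_⟩
  have one_le_ord : ((1 : ℕ) : ℕ∞) ≤ ringOrd R x :=
    natCast_le_ringOrd_iff.mpr (by rwa [pow_one])
  obtain ⟨t, ord_eq⟩ := ENat.ne_top_iff_exists.mp ht
  rw [← ord_eq] at one_le_ord ⊢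
  have one_le_t : 1 ≤ t := mod_cast one_le_ord
  have ord_lt_succ : ringOrd R x < (t + 1 : ℕ) := by
    rw [← ord_eq]
    exact mod_cast t.lt_succ_self
  have succ_pos : 1 ≤ t + 1 := Nat.le_add_left 1 t
  calc ringOrd S (f x)
      ≤ ((t + 1) * C : ℕ) :=
        (ringOrd_map_lt_of_ringOrd_lt f (ha _ succ_pos) (hb _ succ_pos).le ord_lt_succ).le
    _ ≤ (2 * C * t : ℕ) := by
        have : (t + 1) * C ≤ 2 * t * C := Nat.mul_le_mul_right C (by lia)
        exact mod_cast this.trans_eq (by ring)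
    _ = 2 * (C : ℕ∞) * t := by norm_cast
end

section
/- Let k ≥ 1, let U ⊆ ℂ^k be open, let g : U → ℂ^k be complex-analytic on U, let x ∈ U and y := g(x). Let J : U → ℂ be the Jacobian determinant of g, J(z) := det(Dg(z)) (the determinant of the Fréchet derivative of g at z, an endomorphism of ℂ^k), and assume ord_x(J) < ∞ (i.e. J does not vanish identically near x). Then for every complex-analytic function φ defined on a neighborhood of y with ord_y(φ) < ∞, one has ord_x(φ ∘ g) ≤ (k + ord_x(J)) · ord_y(φ). -/
/-- The order of vanishing of a function at a point: the smallest `n ∈ ℕ` such that the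
`n`-th iterated Fréchet derivative of `f` at `p` is nonzero, as an element of `ℕ∞`
(so it is `⊤` when all iterated derivatives vanish). -/
noncomputable def ordAt {E F : Type*} [NormedAddCommGroup E] [NormedSpace ℂ E]
    [NormedAddCommGroup F] [NormedSpace ℂ F] (f : E → F) (p : E) : ℕ∞ :=
  sInf ((fun n : ℕ => (n : ℕ∞)) '' {n : ℕ | iteratedFDeriv ℂ n f p ≠ 0})

/-!
By Cramer's rule, every vector `u` admits an analytic vector field `a` with `Dg(z) a(z) = J(z) u`,
so the chain rule gives `D(φ ∘ g)(z) a(z) = J(z) · (∂ᵤφ)(g z)`. Differentiation lowers the order of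
vanishing by at most one, evaluation at `a` does not lower it, and orders add up in products; hence
`ord_x (φ ∘ g) ≤ 1 + ord_x J + ord_x (∂ᵤφ ∘ g)`. Choosing `u` such that `∂ᵤφ` vanishes to lower
order than `φ` and iterating `ord_y φ` times gives the bound `(1 + ord_x J) · ord_y φ`.

Additivity of orders is reduced to one variable: the order of an analytic function is the least
order of its restrictions to the complex lines through the point, attained on generic lines.
-/

open scoped ContDiff Topology

section NontriviallyNormedField

variable {𝕜 E F G : Type*} [NontriviallyNormedField 𝕜] [NormedAddCommGroup E] [NormedSpace 𝕜 E]
  [NormedAddCommGroup F] [NormedSpace 𝕜 F] [NormedAddCommGroup G] [NormedSpace 𝕜 G]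

theorem iteratedFDeriv_eq_zero_iff_forall_diag [CharZero 𝕜] {f : E → F} {p : E}
    (hf : ContDiffAt 𝕜 ω f p) (n : ℕ) :
    iteratedFDeriv 𝕜 n f p = 0 ↔ ∀ v, iteratedFDeriv 𝕜 n f p (fun _ ↦ v) = 0 := by
  refine ⟨fun h v ↦ by simp [h], fun hdiag ↦ ?_⟩
  ext v
  have polarization : (n.factorial : 𝕜) • iteratedFDeriv 𝕜 n f p v = 0 := by
    have hsum := (iteratedFDeriv 𝕜 n f p).iteratedFDeriv_comp_diagonal 0 v
    have hperm (σ : Equiv.Perm (Fin n)) :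
        iteratedFDeriv 𝕜 n f p (fun i ↦ v (σ i)) = iteratedFDeriv 𝕜 n f p v :=
      hf.iteratedFDeriv_comp_perm v σ
    simpa [hdiag, hperm, Fintype.card_perm, Nat.cast_smul_eq_nsmul] using hsum.symm
  exact (smul_eq_zero.1 polarization).resolve_left (Nat.cast_ne_zero.2 n.factorial_ne_zero)

theorem analyticAt_comp_line {f : E → F} {p : E} (hf : AnalyticAt 𝕜 f p) (v : E) :
    AnalyticAt 𝕜 (fun t : 𝕜 ↦ f (p + t • v)) 0 :=
  AnalyticAt.fun_comp (by simpa using hf) (by fun_prop)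

theorem iteratedDeriv_comp_line [CompleteSpace F] {f : E → F} {p : E}
    (hf : AnalyticAt 𝕜 f p) (v : E) (n : ℕ) :
    iteratedDeriv n (fun t : 𝕜 ↦ f (p + t • v)) 0 = iteratedFDeriv 𝕜 n f p (fun _ ↦ v) := by
  obtain ⟨q, r, hq⟩ := hf
  let line : 𝕜 →L[𝕜] E := ContinuousLinearMap.toSpanSingleton 𝕜 v
  have hq_zero : HasFPowerSeriesOnBall (fun w ↦ f (p + w)) q (line 0) r := by
    simpa [add_comm] using hq.comp_sub (-p)
  have hdiag := hq_zero.compContinuousLinearMap.factorial_smul 1 n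
  rw [FormalMultilinearSeries.compContinuousLinearMap_apply] at hdiag
  rw [iteratedDeriv_eq_iteratedFDeriv, ← hq.factorial_smul v n]
  simpa [line, Function.comp_def] using hdiag.symm

theorem analyticOnNhd_continuousMultilinearMap_diag {n : ℕ} (q : E [×n]→L[𝕜] F) :
    AnalyticOnNhd 𝕜 (fun v ↦ q (fun _ ↦ v)) Set.univ := fun _ _ ↦
  q.analyticAt.comp (AnalyticAt.pi fun _ ↦ analyticAt_id)

theorem dense_setOf_ne_zero_of_analyticOnNhd [PreconnectedSpace E] {f : E → F}
    (hf : AnalyticOnNhd 𝕜 f Set.univ) {w : E} (hw : f w ≠ 0) : Dense {v | f v ≠ 0} := by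
  refine dense_iff_inter_open.2 fun U hU ⟨v, hv⟩ ↦ ?_
  by_contra hempty
  refine hw (congrFun (hf.eq_of_eventuallyEq (z₀ := v) analyticOnNhd_const ?_) w)
  filter_upwards [hU.mem_nhds hv] with z hz
  by_contra hne
  exact hempty ⟨z, hz, hne⟩

theorem analyticAt_det_of_forall_entry {ι : Type*} [Fintype ι] [DecidableEq ι]
    {M : E → Matrix ι ι 𝕜} {p : E} (hM : ∀ i j, AnalyticAt 𝕜 (fun z ↦ M z i j) p) :
    AnalyticAt 𝕜 (fun z ↦ (M z).det) p := by
  simp only [Matrix.det_apply']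
  exact Finset.analyticAt_fun_sum _ fun σ _ ↦
    analyticAt_const.mul (Finset.analyticAt_fun_prod _ fun i _ ↦ hM (σ i) i)

theorem analyticAt_clm_apply {A : E → F →L[𝕜] G} {a : E → F} {p : E}
    (hA : AnalyticAt 𝕜 A p) (ha : AnalyticAt 𝕜 a p) : AnalyticAt 𝕜 (fun z ↦ A z (a z)) p :=
  ((ContinuousLinearMap.apply 𝕜 G).flip.analyticAt_bilinear _).comp₂ hA ha

end NontriviallyNormedField

section Cramer

variable {𝕜 E V : Type*} [NontriviallyNormedField 𝕜] [CompleteSpace 𝕜]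
  [NormedAddCommGroup E] [NormedSpace 𝕜 E]
  [NormedAddCommGroup V] [NormedSpace 𝕜 V] [FiniteDimensional 𝕜 V]
  {A : E → V →L[𝕜] V} {p : E}

theorem analyticAt_toMatrix_entry {ι : Type*} [Fintype ι] [DecidableEq ι]
    (b : Module.Basis ι 𝕜 V) (hA : AnalyticAt 𝕜 A p) (i j : ι) :
    AnalyticAt 𝕜 (fun z ↦ LinearMap.toMatrix b b (A z : V →ₗ[𝕜] V) i j) p := by
  simp only [LinearMap.toMatrix_apply]
  exact ((b.coord i).toContinuousLinearMap.analyticAt _).comp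
    (analyticAt_clm_apply hA analyticAt_const)

theorem analyticAt_clm_det (hA : AnalyticAt 𝕜 A p) : AnalyticAt 𝕜 (fun z ↦ (A z).det) p := by
  let b := Module.finBasis 𝕜 V
  have hdet (z : E) : (A z).det = (LinearMap.toMatrix b b (A z : V →ₗ[𝕜] V)).det :=
    (LinearMap.det_toMatrix b _).symm
  simpa only [hdet] using analyticAt_det_of_forall_entry (analyticAt_toMatrix_entry b hA)

theorem exists_analyticAt_apply_eq_det_smul (hA : AnalyticAt 𝕜 A p) (u : V) :
    ∃ a : E → V, AnalyticAt 𝕜 a p ∧ ∀ z, A z (a z) = (A z).det • u := by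
  let b := Module.finBasis 𝕜 V
  let M (z : E) := LinearMap.toMatrix b b (A z : V →ₗ[𝕜] V)
  let a (z : E) : V := ∑ i, (M z).cramer (b.repr u) i • b i
  have hcoord (z : E) : ⇑(b.repr (a z)) = (M z).cramer (b.repr u) := b.repr_sum_self _
  refine ⟨a, ?_, fun z ↦ b.repr.injective (DFunLike.coe_injective ?_)⟩
  · refine Finset.analyticAt_fun_sum _ fun i _ ↦ AnalyticAt.smul ?_ analyticAt_const
    simp only [Matrix.cramer_apply]
    refine analyticAt_det_of_forall_entry fun j l ↦ ?_
    rcases eq_or_ne l i with rfl | hl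
    · simpa using analyticAt_const
    · simpa [hl] using analyticAt_toMatrix_entry b hA j l
  · calc ⇑(b.repr (A z (a z)))
        = (M z).mulVec (b.repr (a z)) := (LinearMap.toMatrix_mulVec_repr b b _ _).symm
      _ = (M z).det • ⇑(b.repr u) := by rw [hcoord, Matrix.mulVec_cramer]
      _ = ⇑(b.repr ((A z).det • u)) := by
        rw [map_smul, Finsupp.coe_smul, LinearMap.det_toMatrix]

end Cramer

section OrdAt

variable {E F G : Type*} [NormedAddCommGroup E] [NormedSpace ℂ E]
  [NormedAddCommGroup F] [NormedSpace ℂ F] [NormedAddCommGroup G] [NormedSpace ℂ G]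
  {f : E → F} {p : E}

theorem ordAt_le_of_iteratedFDeriv_ne_zero {n : ℕ} (h : iteratedFDeriv ℂ n f p ≠ 0) :
    ordAt f p ≤ n :=
  sInf_le ⟨n, h, rfl⟩

theorem natCast_le_ordAt {n : ℕ} :
    (n : ℕ∞) ≤ ordAt f p ↔ ∀ i < n, iteratedFDeriv ℂ i f p = 0 := by
  simp only [ordAt, le_sInf_iff, Set.forall_mem_image, Set.mem_ofPred_eq, Nat.cast_le]
  exact forall_congr' fun i ↦ by rw [← not_lt, not_imp_not]

theorem iteratedFDeriv_ne_zero_of_ordAt_eq {n : ℕ} (h : ordAt f p = n) :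
    iteratedFDeriv ℂ n f p ≠ 0 := by
  intro hn
  have hlt : ((n + 1 : ℕ) : ℕ∞) ≤ ordAt f p := by
    refine natCast_le_ordAt.2 fun i hi ↦ ?_
    rcases Nat.lt_succ_iff_lt_or_eq.1 hi with hi | rfl
    · exact natCast_le_ordAt.1 h.ge i hi
    · exact hn
  rw [h, Nat.cast_le] at hlt
  exact n.lt_irrefl hlt

theorem ordAt_congr {f₁ f₂ : E → F} (h : f₁ =ᶠ[𝓝 p] f₂) : ordAt f₁ p = ordAt f₂ p := by
  simp only [ordAt, (h.iteratedFDeriv ℂ _).eq_of_nhds]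

theorem ordAt_le_ordAt_fderiv_add_one : ordAt f p ≤ ordAt (fderiv ℂ f) p + 1 := by
  cases h : ordAt (fderiv ℂ f) p with
  | top => simp
  | coe n =>
    refine ordAt_le_of_iteratedFDeriv_ne_zero (n := n + 1) ?_
    rw [← norm_ne_zero_iff, ← norm_iteratedFDeriv_fderiv, norm_ne_zero_iff]
    exact iteratedFDeriv_ne_zero_of_ordAt_eq h

theorem exists_iteratedFDeriv_fderiv_apply_ne_zero [CompleteSpace F] (hf : AnalyticAt ℂ f p)
    {n : ℕ} (h : iteratedFDeriv ℂ (n + 1) f p ≠ 0) :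
    ∃ u, iteratedFDeriv ℂ n (fun z ↦ fderiv ℂ f z u) p ≠ 0 := by
  obtain ⟨w, hw⟩ := DFunLike.ne_iff.1 h
  refine ⟨w (Fin.last n), fun hzero ↦ hw ?_⟩
  let evalLast := ContinuousLinearMap.apply ℂ F (w (Fin.last n))
  have hcomp := evalLast.iteratedFDeriv_comp_left (hf.fderiv.contDiffAt (n := n)) le_rfl
  rw [iteratedFDeriv_succ_apply_right]
  exact (DFunLike.congr_fun hcomp (Fin.init w)).symm.trans (DFunLike.congr_fun hzero (Fin.init w))

theorem natCast_le_ordAt_iff_forall_line [CompleteSpace F] (hf : AnalyticAt ℂ f p) {n : ℕ} :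
    (n : ℕ∞) ≤ ordAt f p ↔ ∀ v, (n : ℕ∞) ≤ analyticOrderAt (fun t : ℂ ↦ f (p + t • v)) 0 := by
  simp only [natCast_le_ordAt, iteratedFDeriv_eq_zero_iff_forall_diag hf.contDiffAt,
    natCast_le_analyticOrderAt_iff_iteratedDeriv_eq_zero (analyticAt_comp_line hf _),
    iteratedDeriv_comp_line hf]
  exact ⟨fun h v i hi ↦ h i hi v, fun h i hi v ↦ h v i hi⟩

theorem ordAt_eq_iInf_analyticOrderAt_line [CompleteSpace F] (hf : AnalyticAt ℂ f p) :
    ordAt f p = ⨅ v, analyticOrderAt (fun t : ℂ ↦ f (p + t • v)) 0 :=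
  ENat.eq_of_forall_natCast_le_iff fun _ ↦ by
    rw [natCast_le_ordAt_iff_forall_line hf, le_iInf_iff]

theorem ordAt_le_analyticOrderAt_line [CompleteSpace F] (hf : AnalyticAt ℂ f p) (v : E) :
    ordAt f p ≤ analyticOrderAt (fun t : ℂ ↦ f (p + t • v)) 0 :=
  (ordAt_eq_iInf_analyticOrderAt_line hf).trans_le (iInf_le _ v)

theorem analyticOrderAt_line_le_of_diag_ne_zero [CompleteSpace F] (hf : AnalyticAt ℂ f p)
    {n : ℕ} {v : E} (h : iteratedFDeriv ℂ n f p (fun _ ↦ v) ≠ 0) :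
    analyticOrderAt (fun t : ℂ ↦ f (p + t • v)) 0 ≤ n := by
  contrapose! h
  rw [← iteratedDeriv_comp_line hf]
  exact (natCast_le_analyticOrderAt_iff_iteratedDeriv_eq_zero (analyticAt_comp_line hf v)).1
    (by exact_mod_cast Order.add_one_le_of_lt h) n n.lt_succ_self

theorem exists_isOpen_dense_analyticOrderAt_line_eq [CompleteSpace F] (hf : AnalyticAt ℂ f p) :
    ∃ U : Set E, IsOpen U ∧ Dense U ∧
      ∀ v ∈ U, analyticOrderAt (fun t : ℂ ↦ f (p + t • v)) 0 = ordAt f p := by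
  cases hn : ordAt f p with
  | top =>
    exact ⟨Set.univ, isOpen_univ, dense_univ, fun v _ ↦
      top_le_iff.1 (hn ▸ ordAt_le_analyticOrderAt_line hf v)⟩
  | coe n =>
    have hdiag := (iteratedFDeriv_eq_zero_iff_forall_diag hf.contDiffAt n).not.1
      (iteratedFDeriv_ne_zero_of_ordAt_eq hn)
    obtain ⟨w, hw⟩ := not_forall.1 hdiag
    have hanalytic := analyticOnNhd_continuousMultilinearMap_diag (iteratedFDeriv ℂ n f p)
    refine ⟨{v | iteratedFDeriv ℂ n f p (fun _ ↦ v) ≠ 0}, ?_,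
      dense_setOf_ne_zero_of_analyticOnNhd hanalytic hw, fun v hv ↦ le_antisymm ?_ ?_⟩
    · exact isOpen_ne_fun (continuousOn_univ.1 hanalytic.continuousOn) continuous_const
    · exact analyticOrderAt_line_le_of_diag_ne_zero hf hv
    · exact hn ▸ ordAt_le_analyticOrderAt_line hf v

theorem ordAt_smul [CompleteSpace F] {c : E → ℂ} (hc : AnalyticAt ℂ c p)
    (hf : AnalyticAt ℂ f p) : ordAt (c • f) p = ordAt c p + ordAt f p := by
  have hline (v : E) : analyticOrderAt (fun t : ℂ ↦ (c • f) (p + t • v)) 0 =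
      analyticOrderAt (fun t : ℂ ↦ c (p + t • v)) 0 +
        analyticOrderAt (fun t : ℂ ↦ f (p + t • v)) 0 :=
    analyticOrderAt_smul (analyticAt_comp_line hc v) (analyticAt_comp_line hf v)
  apply le_antisymm
  · obtain ⟨U, hU_open, hU_dense, hU⟩ := exists_isOpen_dense_analyticOrderAt_line_eq hc
    obtain ⟨W, -, hW_dense, hW⟩ := exists_isOpen_dense_analyticOrderAt_line_eq hf
    obtain ⟨v, hvU, hvW⟩ := (hU_dense.inter_of_isOpen_left hW_dense hU_open).nonempty
    rw [← hU v hvU, ← hW v hvW, ← hline]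
    exact ordAt_le_analyticOrderAt_line (hc.smul hf) v
  · rw [ordAt_eq_iInf_analyticOrderAt_line (hc.smul hf)]
    refine le_iInf fun v ↦ ?_
    rw [hline]
    exact add_le_add (ordAt_le_analyticOrderAt_line hc v) (ordAt_le_analyticOrderAt_line hf v)

theorem ordAt_le_ordAt_clm_apply [CompleteSpace G] {A : E → F →L[ℂ] G} {a : E → F}
    (hA : AnalyticAt ℂ A p) (ha : AnalyticAt ℂ a p) :
    ordAt A p ≤ ordAt (fun z ↦ A z (a z)) p := by
  rw [ordAt_eq_iInf_analyticOrderAt_line (analyticAt_clm_apply hA ha)]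
  refine le_iInf fun v ↦ (ordAt_le_analyticOrderAt_line hA v).trans ?_
  refine ENat.forall_natCast_le_iff_le.1 fun n hn ↦ ?_
  have hAv := analyticAt_comp_line hA v
  have hav := analyticAt_comp_line ha v
  obtain ⟨B, hB, hAB⟩ := (natCast_le_analyticOrderAt hAv).1 hn
  refine (natCast_le_analyticOrderAt (analyticAt_clm_apply hAv hav)).2
    ⟨_, analyticAt_clm_apply hB hav, ?_⟩
  filter_upwards [hAB] with t ht
  rw [ht, smul_apply]

end OrdAt

section Jacobian

variable {E F : Type*} [NormedAddCommGroup E] [NormedSpace ℂ E] [FiniteDimensional ℂ E]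
  [NormedAddCommGroup F] [NormedSpace ℂ F] [CompleteSpace F]
  {g : E → E} {φ : E → F} {x : E}

theorem exists_analyticAt_fderiv_comp_apply_eq_det_smul (hg : AnalyticAt ℂ g x)
    (hφ : AnalyticAt ℂ φ (g x)) (u : E) :
    ∃ a : E → E, AnalyticAt ℂ a x ∧ (fun z ↦ fderiv ℂ (φ ∘ g) z (a z)) =ᶠ[𝓝 x]
      (fun z ↦ (fderiv ℂ g z).det) • (fun y ↦ fderiv ℂ φ y u) ∘ g := by
  obtain ⟨a, ha, hcramer⟩ := exists_analyticAt_apply_eq_det_smul hg.fderiv u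
  refine ⟨a, ha, ?_⟩
  filter_upwards [hg.eventually_analyticAt, hg.continuousAt.eventually hφ.eventually_analyticAt]
    with z hgz hφz
  calc fderiv ℂ (φ ∘ g) z (a z)
      = fderiv ℂ φ (g z) (fderiv ℂ g z (a z)) := by
        rw [fderiv_comp z hφz.differentiableAt hgz.differentiableAt,
          ContinuousLinearMap.comp_apply]
    _ = (fderiv ℂ g z).det • fderiv ℂ φ (g z) u := by rw [hcramer, map_smul]

theorem ordAt_comp_le_ordAt_det_add_ordAt_fderiv_apply_comp (hg : AnalyticAt ℂ g x)
    (hφ : AnalyticAt ℂ φ (g x)) (u : E) :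
    ordAt (φ ∘ g) x ≤ ordAt (fun z ↦ (fderiv ℂ g z).det) x +
      ordAt ((fun y ↦ fderiv ℂ φ y u) ∘ g) x + 1 := by
  obtain ⟨a, ha, hdet⟩ := exists_analyticAt_fderiv_comp_apply_eq_det_smul hg hφ u
  have hφu : AnalyticAt ℂ (fun y ↦ fderiv ℂ φ y u) (g x) :=
    analyticAt_clm_apply hφ.fderiv analyticAt_const
  calc ordAt (φ ∘ g) x
      ≤ ordAt (fderiv ℂ (φ ∘ g)) x + 1 := ordAt_le_ordAt_fderiv_add_one
    _ ≤ ordAt (fun z ↦ fderiv ℂ (φ ∘ g) z (a z)) x + 1 := by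
        gcongr
        exact ordAt_le_ordAt_clm_apply (hφ.comp hg).fderiv ha
    _ = _ := by
        rw [ordAt_congr hdet, ordAt_smul (analyticAt_clm_det hg.fderiv) (hφu.comp hg)]

theorem ordAt_comp_le_of_iteratedFDeriv_ne_zero (hg : AnalyticAt ℂ g x)
    (hφ : AnalyticAt ℂ φ (g x)) {m : ℕ} (hm : iteratedFDeriv ℂ m φ (g x) ≠ 0) :
    ordAt (φ ∘ g) x ≤ (1 + ordAt (fun z ↦ (fderiv ℂ g z).det) x) * m := by
  induction m generalizing φ with
  | zero =>
    have hcomp : iteratedFDeriv ℂ 0 (φ ∘ g) x ≠ 0 := by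
      rwa [← norm_ne_zero_iff, norm_iteratedFDeriv_zero] at hm ⊢
    simpa using ordAt_le_of_iteratedFDeriv_ne_zero hcomp
  | succ m ih =>
    obtain ⟨u, hu⟩ := exists_iteratedFDeriv_fderiv_apply_ne_zero hφ hm
    have hind := ih (analyticAt_clm_apply hφ.fderiv analyticAt_const) hu
    calc ordAt (φ ∘ g) x
        ≤ ordAt (fun z ↦ (fderiv ℂ g z).det) x + ordAt ((fun y ↦ fderiv ℂ φ y u) ∘ g) x + 1 :=
          ordAt_comp_le_ordAt_det_add_ordAt_fderiv_apply_comp hg hφ u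
      _ ≤ ordAt (fun z ↦ (fderiv ℂ g z).det) x +
            (1 + ordAt (fun z ↦ (fderiv ℂ g z).det) x) * m + 1 := by gcongr
      _ = (1 + ordAt (fun z ↦ (fderiv ℂ g z).det) x) * (m + 1 : ℕ) := by push_cast; ring

theorem ordAt_comp_le_of_jacobian_general (hg : AnalyticAt ℂ g x) (hφ : AnalyticAt ℂ φ (g x)) :
    ordAt (φ ∘ g) x ≤ (1 + ordAt (fun z ↦ (fderiv ℂ g z).det) x) * ordAt φ (g x) := by
  cases hm : ordAt φ (g x) with
  | top => simp
  | coe m =>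
    exact ordAt_comp_le_of_iteratedFDeriv_ne_zero hg hφ (iteratedFDeriv_ne_zero_of_ordAt_eq hm)

end Jacobian

/-- smooth case of Theorem 3.7: if `g` is analytic on an open set
`U ⊆ ℂ^k`, `x ∈ U`, `y = g x`, the Jacobian determinant `J` of `g` has finite order of
vanishing at `x`, and `φ` is analytic near `y` with finite order of vanishing, then
`ord_x(φ ∘ g) ≤ (k + ord_x J) · ord_y φ`. -/
theorem ordAt_comp_le_of_jacobian
    (k : ℕ) (hk : 1 ≤ k) (U : Set (Fin k → ℂ)) (hU : IsOpen U)
    (g : (Fin k → ℂ) → (Fin k → ℂ)) (hg : ∀ z ∈ U, AnalyticAt ℂ g z)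
    (x : Fin k → ℂ) (hx : x ∈ U) (y : Fin k → ℂ) (hy : y = g x)
    (J : (Fin k → ℂ) → ℂ) (hJ : ∀ z, J z = (fderiv ℂ g z).det)
    (hJx : ordAt J x ≠ ⊤)
    (φ : (Fin k → ℂ) → ℂ) (hφ : AnalyticAt ℂ φ y) (hφy : ordAt φ y ≠ ⊤) :
    ordAt (φ ∘ g) x ≤ ((k : ℕ∞) + ordAt J x) * ordAt φ y := by
  obtain rfl : J = fun z ↦ (fderiv ℂ g z).det := funext hJ
  subst hy
  exact (ordAt_comp_le_of_jacobian_general (hg x hx) hφ).trans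
    (by gcongr; exact_mod_cast hk)
end

section
/- Let d ≥ 2 be a real number, p ≥ 1 an integer, δ > 0, θ > 0, β ≥ 0 real numbers, and M ∈ ℕ. Let (ν_r)_{r=0}^{M} and (d'_r)_{r=0}^{M} be real numbers such that for all 0 ≤ r ≤ M: ν_r ≥ δ·d^{-r}, d'_r ≥ 0, and d'_0 + d'_1 + ⋯ + d'_r ≥ θ·d^{rp}. Assume moreover β·d^{M} ≤ δ/2. Then Σ_{r=0}^{M} (ν_r − β)^p · d'_r ≥ (θ/2)·(δ/2)^p·(M+1). -/
/-!
Since `β ≤ (δ / 2) / d ^ M ≤ (δ / 2) / d ^ r` for `r ≤ M`, the factor `(ν r - β) ^ p` is at least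
`(δ / 2) ^ p * D⁻¹ ^ r` with `D = d ^ p`. Abel summation against the antitone weight `D⁻¹ ^ r`
rewrites the sum in terms of the partial sums of `d'`, which are at least `θ * D ^ r`: each of the
`M` difference terms contributes at least `θ * (1 - D⁻¹) ≥ θ / 2`, and the boundary term at
least `θ`.
-/

open Finset

theorem by_parts_le_sum_range_succ_smul {R E : Type*} [Ring R] [PartialOrder R]
    [IsOrderedAddMonoid R] [AddCommGroup E] [PartialOrder E] [IsOrderedAddMonoid E] [Module R E]
    [PosSMulMono R E] {w : ℕ → R} {a A : ℕ → E} {n : ℕ} (hwn : 0 ≤ w n)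
    (hw : ∀ i < n, w (i + 1) ≤ w i) (hA : ∀ m ≤ n, A m ≤ ∑ i ∈ range (m + 1), a i) :
    w n • A n + ∑ i ∈ range n, (w i - w (i + 1)) • A i ≤ ∑ i ∈ range (n + 1), w i • a i := by
  have abel_summation : ∑ i ∈ range (n + 1), w i • a i =
      w n • ∑ i ∈ range (n + 1), a i +
        ∑ i ∈ range n, (w i - w (i + 1)) • ∑ j ∈ range (i + 1), a j := by
    rw [sum_range_by_parts, Nat.add_sub_cancel, sub_eq_add_neg, ← sum_neg_distrib]
    simp only [← neg_smul, neg_sub]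
  rw [abel_summation]
  refine add_le_add (smul_le_smul_of_nonneg_left (hA n le_rfl) hwn) (sum_le_sum fun i hi ↦ ?_)
  have hin : i < n := mem_range.mp hi
  exact smul_le_smul_of_nonneg_left (hA i hin.le) (sub_nonneg.mpr (hw i hin))

section LinearOrderedField

variable {K : Type*} [Field K] [LinearOrder K] [IsStrictOrderedRing K]

theorem mul_one_add_mul_le_sum_inv_pow_mul {D θ : K} {a : ℕ → K} {n : ℕ} (hD : 1 ≤ D)
    (ha : ∀ m ≤ n, θ * D ^ m ≤ ∑ i ∈ range (m + 1), a i) :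
    θ * (1 + n * (1 - D⁻¹)) ≤ ∑ i ∈ range (n + 1), D⁻¹ ^ i * a i := by
  have hD0 : 0 < D := one_pos.trans_le hD
  have hinv : 0 ≤ D⁻¹ := inv_nonneg.mpr hD0.le
  have cancel (i : ℕ) : D⁻¹ ^ i * (θ * D ^ i) = θ := by
    rw [mul_left_comm, ← mul_pow, inv_mul_cancel₀ hD0.ne', one_pow, mul_one]
  have increment (i : ℕ) : (D⁻¹ ^ i - D⁻¹ ^ (i + 1)) * (θ * D ^ i) = θ * (1 - D⁻¹) := by
    linear_combination (1 - D⁻¹) * cancel i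
  calc θ * (1 + n * (1 - D⁻¹))
      = D⁻¹ ^ n • (θ * D ^ n) +
          ∑ i ∈ range n, (D⁻¹ ^ i - D⁻¹ ^ (i + 1)) • (θ * D ^ i) := by
        simp only [smul_eq_mul, cancel, increment, sum_const, card_range, nsmul_eq_mul]
        ring
    _ ≤ ∑ i ∈ range (n + 1), D⁻¹ ^ i * a i :=
        by_parts_le_sum_range_succ_smul (pow_nonneg hinv n)
          (fun i _ ↦ pow_le_pow_of_le_one hinv (inv_le_one_of_one_le₀ hD) i.le_succ) ha

theorem div_pow_le_sub_of_mul_pow_le {d δ β c x : K} {r M : ℕ} (hd : 1 ≤ d) (hβ : 0 ≤ β)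
    (hr : r ≤ M) (hx : δ / d ^ r ≤ x) (hβM : β * d ^ M ≤ δ - c) : c / d ^ r ≤ x - β := by
  have hdr : 0 < d ^ r := pow_pos (one_pos.trans_le hd) r
  have hβr : β * d ^ r ≤ δ - c :=
    (mul_le_mul_of_nonneg_left (pow_le_pow_right₀ hd hr) hβ).trans hβM
  have hδ : δ ≤ x * d ^ r := (div_le_iff₀ hdr).mp hx
  rw [div_le_iff₀ hdr]
  linarith

theorem add_one_div_two_le_one_add_mul_one_sub_inv {D x : K} (hD : 2 ≤ D) (hx : 0 ≤ x) :
    (x + 1) / 2 ≤ 1 + x * (1 - D⁻¹) := by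
  have hinv : D⁻¹ ≤ 2⁻¹ := inv_anti₀ two_pos hD
  linarith [mul_le_mul_of_nonneg_left hinv hx]

theorem counting_inequality_general {d δ θ β c : K} {p M : ℕ} {ν d' : ℕ → K} (hd : 1 ≤ d)
    (hβ : 0 ≤ β) (hc : 0 ≤ c) (hν : ∀ r ≤ M, δ / d ^ r ≤ ν r) (hd' : ∀ r ≤ M, 0 ≤ d' r)
    (hsum : ∀ r ≤ M, θ * d ^ (r * p) ≤ ∑ i ∈ range (r + 1), d' i) (hβM : β * d ^ M ≤ δ - c) :
    c ^ p * (θ * (1 + M * (1 - (d ^ p)⁻¹))) ≤ ∑ r ∈ range (M + 1), (ν r - β) ^ p * d' r := by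
  have hsum_pow : ∀ r ≤ M, θ * (d ^ p) ^ r ≤ ∑ i ∈ range (r + 1), d' i := fun r hr ↦ by
    simpa only [pow_mul'] using hsum r hr
  calc c ^ p * (θ * (1 + M * (1 - (d ^ p)⁻¹)))
      ≤ c ^ p * ∑ r ∈ range (M + 1), (d ^ p)⁻¹ ^ r * d' r :=
        mul_le_mul_of_nonneg_left
          (mul_one_add_mul_le_sum_inv_pow_mul (one_le_pow₀ hd) hsum_pow) (pow_nonneg hc p)
    _ = ∑ r ∈ range (M + 1), (c / d ^ r) ^ p * d' r := by
        rw [mul_sum]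
        refine sum_congr rfl fun r _ ↦ ?_
        rw [div_pow, pow_right_comm d r p, inv_pow, div_eq_mul_inv, mul_assoc]
    _ ≤ ∑ r ∈ range (M + 1), (ν r - β) ^ p * d' r := by
        refine sum_le_sum fun r hr ↦ ?_
        have hrM : r ≤ M := Nat.lt_succ_iff.mp (mem_range.mp hr)
        have hdr : 0 ≤ d ^ r := pow_nonneg (zero_le_one.trans hd) r
        exact mul_le_mul_of_nonneg_right (pow_le_pow_left₀ (div_nonneg hc hdr)
          (div_pow_le_sub_of_mul_pow_le hd hβ hrM (hν r hrM) hβM) p) (hd' r hrM)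

end LinearOrderedField

/-- key counting inequality in the proof of Theorem 4.2: if
`ν_r ≥ δ/d^r`, `d'_r ≥ 0`, `d'_0 + ⋯ + d'_r ≥ θ·d^{rp}` for `0 ≤ r ≤ M`, and
`β·d^M ≤ δ/2`, then `Σ_{r=0}^M (ν_r − β)^p·d'_r ≥ (θ/2)·(δ/2)^p·(M+1)`. -/
theorem counting_inequality
    (d : ℝ) (hd : 2 ≤ d) (p : ℕ) (hp : 1 ≤ p)
    (δ θ β : ℝ) (hδ : 0 < δ) (hθ : 0 < θ) (hβ : 0 ≤ β) (M : ℕ)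
    (ν d' : ℕ → ℝ)
    (hν : ∀ r ≤ M, δ / d ^ r ≤ ν r)
    (hd' : ∀ r ≤ M, 0 ≤ d' r)
    (hsum : ∀ r ≤ M, θ * d ^ (r * p) ≤ ∑ i ∈ Finset.range (r + 1), d' i)
    (hβM : β * d ^ M ≤ δ / 2) :
    (θ / 2) * (δ / 2) ^ p * (M + 1) ≤
      ∑ r ∈ Finset.range (M + 1), (ν r - β) ^ p * d' r := by
  have hD : 2 ≤ d ^ p :=
    hd.trans (le_self_pow₀ (one_le_two.trans hd) (Nat.one_le_iff_ne_zero.mp hp))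
  calc (θ / 2) * (δ / 2) ^ p * (M + 1) = (δ / 2) ^ p * (θ * ((M + 1) / 2)) := by ring
    _ ≤ (δ / 2) ^ p * (θ * (1 + M * (1 - (d ^ p)⁻¹))) := by
        gcongr
        exact add_one_div_two_le_one_add_mul_one_sub_inv hD M.cast_nonneg
    _ ≤ ∑ r ∈ Finset.range (M + 1), (ν r - β) ^ p * d' r :=
        counting_inequality_general (one_le_two.trans hd) hβ (half_pos hδ).le hν hd' hsum
          (hβM.trans_eq (sub_half δ).symm)
end

section
/- Let V be a finite-dimensional real normed vector space and C ⊆ V a nonempty open convex cone (x, y ∈ C and t > 0 imply x + y ∈ C and t·x ∈ C) whose closure is salient: closure(C) ∩ (−closure(C)) = {0}. Let T : V → V be a linear map with T(C) ⊆ C, and suppose there are v ∈ C and a real number δ > 0 with T(v) = δ·v. Then there exists a constant A > 0 such that ‖T^n(w)‖ ≤ A·δ^n·‖w‖ for every n ∈ ℕ and every w ∈ V. -/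
/-!
For a salient closed cone, compactness of the unit sphere keeps `x + y` away from `0` when `x` and
`y` range over the cone with `max ‖x‖ ‖y‖ = 1`, so no cancellation occurs in sums: `‖x‖` is
bounded by a multiple of `‖x + y‖`. If `w` is so small that `v + w` and `v - w` lie in the cone,
then so do their images under `T ^ n`, whose sum `2 δ ^ n v` therefore controls each of them and
hence their difference `2 T ^ n w`.
-/

open Set Topology

section Normal

variable {W : Type*} [SeminormedAddCommGroup W]

/-- Normality in the sense of ordered normed spaces: the norm of a summand is controlled by the norm
of the sum. For a convex cone `C` inducing the order `≤`, this says `‖x‖ ≤ K * ‖z‖` whenever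
`0 ≤ x ≤ z`. The condition is imposed on arbitrary sets, which need not be cones. -/
def IsNormalSet (C : Set W) : Prop :=
  ∃ K : ℝ, 0 < K ∧ ∀ x ∈ C, ∀ y ∈ C, ‖x‖ ≤ K * ‖x + y‖

lemma IsNormalSet.exists_norm_sub_le {C : Set W} (hC : IsNormalSet C) :
    ∃ K : ℝ, 0 < K ∧ ∀ x ∈ C, ∀ y ∈ C, ‖x - y‖ ≤ K * ‖x + y‖ := by
  obtain ⟨K, hK, hle⟩ := hC
  refine ⟨2 * K, by positivity, fun x hx y hy ↦ ?_⟩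
  calc ‖x - y‖ ≤ ‖x‖ + ‖y‖ := norm_sub_le x y
    _ ≤ K * ‖x + y‖ + K * ‖y + x‖ := add_le_add (hle x hx y hy) (hle y hy x hx)
    _ = 2 * K * ‖x + y‖ := by rw [add_comm y x]; ring

variable {V : Type*} [NormedAddCommGroup V] [NormedSpace ℝ V] [NormedSpace ℝ W]

lemma norm_apply_le_of_forall_mem_closedBall (f : V →ₗ[ℝ] W) {ε c : ℝ} (hε : 0 < ε)
    (hf : ∀ u ∈ Metric.closedBall (0 : V) ε, ‖f u‖ ≤ c) (w : V) : ‖f w‖ ≤ c / ε * ‖w‖ := by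
  rcases eq_or_ne w 0 with rfl | hw
  · simp
  have hw_pos : 0 < ‖w‖ := norm_pos_iff.2 hw
  have hscale : ε / ‖w‖ * ‖w‖ = ε := div_mul_cancel₀ ε hw_pos.ne'
  have hle : ε / ‖w‖ * ‖f w‖ ≤ c := by
    rw [← norm_smul_of_nonneg (by positivity), ← map_smul]
    exact hf _ (by rw [mem_closedBall_zero_iff, norm_smul_of_nonneg (by positivity), hscale])
  calc ‖f w‖ = ε / ‖w‖ * ‖f w‖ / ε * ‖w‖ := by field_simp
    _ ≤ c / ε * ‖w‖ := by gcongr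

lemma IsNormalSet.exists_norm_apply_le {C : Set V} {D : Set W} {v : V} (hD : IsNormalSet D)
    (hC : C ∈ 𝓝 v) :
    ∃ A : ℝ, 0 < A ∧ ∀ f : V →ₗ[ℝ] W, MapsTo f C D → ∀ w, ‖f w‖ ≤ A * ‖f v‖ * ‖w‖ := by
  obtain ⟨K, hK, hsub⟩ := hD.exists_norm_sub_le
  obtain ⟨ε, hε, hball⟩ := Metric.nhds_basis_closedBall.mem_iff.1 hC
  refine ⟨K / ε, by positivity, fun f hf w ↦ ?_⟩
  have hball_le : ∀ u ∈ Metric.closedBall (0 : V) ε, ‖f u‖ ≤ K * ‖f v‖ := by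
    intro u hu
    have hplus : f (v + u) ∈ D := hf (hball (by simpa using hu))
    have hminus : f (v - u) ∈ D := hf (hball (by simpa using hu))
    have hdiff : f (v + u) - f (v - u) = (2 : ℝ) • f u := by simp only [map_add, map_sub]; module
    have hsum : f (v + u) + f (v - u) = (2 : ℝ) • f v := by simp only [map_add, map_sub]; module
    have hle := hsub _ hplus _ hminus
    rw [hdiff, hsum, norm_smul, norm_smul, Real.norm_two] at hle
    linarith
  calc ‖f w‖ ≤ K * ‖f v‖ / ε * ‖w‖ := norm_apply_le_of_forall_mem_closedBall f hε hball_le w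
    _ = K / ε * ‖f v‖ * ‖w‖ := by ring

end Normal

section Salient

variable {V : Type*} [NormedAddCommGroup V] [ProperSpace V]

lemma exists_pos_le_norm_add_of_isClosed {S : Set V} (hS : IsClosed S) (hsal : S ∩ -S ⊆ {0}) :
    ∃ m : ℝ, 0 < m ∧ ∀ p ∈ S ×ˢ S, ‖p‖ = 1 → m ≤ ‖p.1 + p.2‖ := by
  have hcompact : IsCompact (S ×ˢ S ∩ Metric.sphere (0 : V × V) 1) :=
    (isCompact_sphere 0 1).inter_left (hS.prod hS)
  have hpos : ∀ p ∈ S ×ˢ S ∩ Metric.sphere (0 : V × V) 1, 0 < ‖p.1 + p.2‖ := by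
    rintro ⟨x, y⟩ ⟨⟨hx, hy⟩, hxy⟩
    refine norm_pos_iff.2 fun hsum ↦ ?_
    obtain rfl : y = -x := eq_neg_of_add_eq_zero_right hsum
    obtain rfl : x = 0 := hsal ⟨hx, hy⟩
    simp at hxy
  obtain ⟨m, hm, hle⟩ := hcompact.exists_forall_le' (by fun_prop) hpos
  exact ⟨m, hm, fun p hp hp1 ↦ hle p ⟨hp, by simpa using hp1⟩⟩

lemma isNormalSet_of_closure_inter_neg_subset [NormedSpace ℝ V] {C : Set V}
    (hsmul : ∀ x ∈ C, ∀ t : ℝ, 0 < t → t • x ∈ C)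
    (hsal : closure C ∩ -closure C ⊆ {0}) : IsNormalSet C := by
  obtain ⟨m, hm, hle⟩ := exists_pos_le_norm_add_of_isClosed isClosed_closure hsal
  refine ⟨m⁻¹, inv_pos.2 hm, fun x hx y hy ↦ ?_⟩
  rw [le_inv_mul_iff₀ hm]
  rcases eq_or_ne (x, y) 0 with hxy | hxy
  · simp [(Prod.mk_eq_zero.1 hxy).1]
  set r := ‖(x, y)‖
  have hr_pos : 0 < r := norm_pos_iff.2 hxy
  have hmem : r⁻¹ • (x, y) ∈ closure C ×ˢ closure C :=
    ⟨subset_closure (hsmul x hx _ (inv_pos.2 hr_pos)),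
      subset_closure (hsmul y hy _ (inv_pos.2 hr_pos))⟩
  have hm_le : m ≤ r⁻¹ * ‖x + y‖ := by
    simpa only [Prod.smul_mk, ← smul_add, norm_smul_of_nonneg (inv_nonneg.2 hr_pos.le)] using
      hle _ hmem (norm_smul_inv_norm (𝕜 := ℝ) hxy)
  calc m * ‖x‖ ≤ m * r := by gcongr; exact norm_fst_le (x, y)
    _ ≤ ‖x + y‖ := by rwa [← le_div_iff₀ hr_pos, div_eq_inv_mul]

end Salient

lemma pow_apply_of_apply_eq_smul {R M : Type*} [CommSemiring R] [AddCommMonoid M] [Module R M]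
    {T : M →ₗ[R] M} {v : M} {δ : R} (hTv : T v = δ • v) (n : ℕ) : (T ^ n) v = δ ^ n • v := by
  induction n with
  | zero => simp
  | succ n ih => rw [pow_succ, Module.End.mul_apply, hTv, map_smul, ih, smul_smul, pow_succ']

theorem linear_growth_of_invariant_cone_general
    {V : Type*} [NormedAddCommGroup V] [NormedSpace ℝ V] {C : Set V} (hC : IsNormalSet C)
    {T : V →ₗ[ℝ] V} (hTC : MapsTo T C C) {v : V} (hv : C ∈ 𝓝 v)
    {δ : ℝ} (hδ : 0 ≤ δ) (hTv : T v = δ • v) :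
    ∃ A : ℝ, 0 < A ∧ ∀ n : ℕ, ∀ w : V, ‖(T ^ n) w‖ ≤ A * δ ^ n * ‖w‖ := by
  obtain ⟨A, hA, hle⟩ := hC.exists_norm_apply_le hv
  refine ⟨A * (‖v‖ + 1), by positivity, fun n w ↦ ?_⟩
  have hmaps : MapsTo (T ^ n) C C := by simpa only [Module.End.coe_pow] using hTC.iterate n
  calc ‖(T ^ n) w‖ ≤ A * ‖(T ^ n) v‖ * ‖w‖ := hle _ hmaps w
    _ = A * ‖v‖ * δ ^ n * ‖w‖ := by
      rw [pow_apply_of_apply_eq_smul hTv, norm_smul_of_nonneg (pow_nonneg hδ n)]; ring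
    _ ≤ A * (‖v‖ + 1) * δ ^ n * ‖w‖ := by gcongr; exact le_add_of_nonneg_right zero_le_one

/-- Perron–Frobenius-type bound from Section 4.2: let `V` be a
finite-dimensional real normed vector space, `C ⊆ V` a nonempty open convex cone whose
closure is salient, and `T : V → V` linear with `T(C) ⊆ C` and an eigenvector `v ∈ C`
with eigenvalue `δ > 0`.  Then there is `A > 0` with `‖T^n w‖ ≤ A·δ^n·‖w‖` for all `n`
and all `w`. -/
theorem linear_growth_of_invariant_cone
    {V : Type*} [NormedAddCommGroup V] [NormedSpace ℝ V] [FiniteDimensional ℝ V]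
    (C : Set V) (hne : C.Nonempty) (hopen : IsOpen C)
    (hadd : ∀ x ∈ C, ∀ y ∈ C, x + y ∈ C)
    (hsmul : ∀ x ∈ C, ∀ t : ℝ, 0 < t → t • x ∈ C)
    (hsal : closure C ∩ (-(closure C)) = {0})
    (T : V →ₗ[ℝ] V) (hTC : T '' C ⊆ C)
    (v : V) (hv : v ∈ C) (δ : ℝ) (hδ : 0 < δ) (hTv : T v = δ • v) :
    ∃ A : ℝ, 0 < A ∧ ∀ n : ℕ, ∀ w : V, ‖(T ^ n) w‖ ≤ A * δ ^ n * ‖w‖ :=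
  linear_growth_of_invariant_cone_general
    (isNormalSet_of_closure_inter_neg_subset hsmul hsal.subset)
    (mapsTo_iff_image_subset.2 hTC) (hopen.mem_nhds hv) hδ.le hTv
end
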